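/- arXiv:1602.03250 — 2 statements merged into one kernel-verified Lean document; each statement's English description precedes it below -/
import Mathlib

section
/- For every τ ∈ ℍ and every z ∈ ℂ ∖ Λ_τ, ℘₁(z+τ;τ) = ℘₁(z;τ) + G₂(τ)·τ − 2πi. -/
open Complex Real

/-- The lattice point `kτ + l` associated to `p = (k, l) ∈ ℤ²`. -/
noncomputable def latticePt (τ : ℂ) (p : ℤ × ℤ) : ℂ := (p.1 : ℂ) * τ + (p.2 : ℂ)

/-- The Weierstrass function `℘₁(z;τ)`. -/
noncomputable def wp1 (z τ : ℂ) : ℂ :=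
  1 / z + ∑' p : {p : ℤ × ℤ // p ≠ (0, 0)},
    (1 / (z - latticePt τ p.1) + 1 / latticePt τ p.1 + z / (latticePt τ p.1) ^ 2)

/-- The Weierstrass function `℘₂(z;τ)`. -/
noncomputable def wp2 (z τ : ℂ) : ℂ :=
  1 / z ^ 2 + ∑' p : {p : ℤ × ℤ // p ≠ (0, 0)},
    (1 / (z - latticePt τ p.1) ^ 2 - 1 / (latticePt τ p.1) ^ 2)

/-- The Weierstrass function `℘_m(z;τ)` for `m ≥ 3`. -/
noncomputable def wpHigh (m : ℕ) (z τ : ℂ) : ℂ :=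
  ∑' p : ℤ × ℤ, 1 / (z - latticePt τ p) ^ m

/-- The Weierstrass function `℘_m(z;τ)`, `m ≥ 1`. -/
noncomputable def wp (m : ℕ) (z τ : ℂ) : ℂ :=
  if m = 1 then wp1 z τ else if m = 2 then wp2 z τ else wpHigh m z τ

/-- The Eisenstein series `G_k(τ) = Σ_{(m,l) ≠ (0,0)} (mτ+l)^{-k}` (used for `k ≥ 3`). -/
noncomputable def Eis (k : ℕ) (τ : ℂ) : ℂ :=
  ∑' p : {p : ℤ × ℤ // p ≠ (0, 0)}, 1 / (latticePt τ p.1) ^ k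

/-- The quasimodular Eisenstein series
`G₂(τ) = π²/3 + Σ_{m≠0} Σ_{l∈ℤ} (mτ+l)^{-2}` (iterated sum). -/
noncomputable def G2 (τ : ℂ) : ℂ :=
  (Real.pi : ℂ) ^ 2 / 3 +
    ∑' m : {m : ℤ // m ≠ 0}, ∑' l : ℤ, 1 / (((m : ℤ) : ℂ) * τ + (l : ℂ)) ^ 2

open Filter Topology
open UpperHalfPlane hiding I
open scoped Real

/-- The general term of `℘₁`; at `p = (0, 0)` it equals `1 / z`. -/
noncomputable def wp1Term (z τ : ℂ) (p : ℤ × ℤ) : ℂ :=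
  1 / (z - latticePt τ p) + 1 / latticePt τ p + z / (latticePt τ p) ^ 2

lemma latticePt_ne_zero {τ : ℂ} (hτ : 0 < τ.im) {p : ℤ × ℤ} (hp : p ≠ (0, 0)) :
    latticePt τ p ≠ 0 := by
  intro h
  have him := congrArg Complex.im h
  have hre := congrArg Complex.re h
  simp only [latticePt, add_im, mul_im, intCast_re, intCast_im, zero_mul, add_zero, zero_im,
    mul_eq_zero, Int.cast_eq_zero, hτ.ne', or_false] at him
  simp only [latticePt, him, Int.cast_zero, zero_mul, zero_add, intCast_re, zero_re,
    Int.cast_eq_zero] at hre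
  exact hp (Prod.ext him hre)

lemma tsum_eq_add_tsum_ne {β : Type*} {f : β → ℂ} (hf : Summable f) (b : β) :
    ∑' x, f x = f b + ∑' x : {x // x ≠ b}, f x := by
  have h := hf.tsum_subtype_add_tsum_subtype_compl {b}
  rw [tsum_singleton] at h
  exact h.symm

lemma summable_norm_inv_latticePt_sub_pow {τ : ℂ} (hτ : 0 < τ.im) (x : ℂ) :
    Summable fun p : ℤ × ℤ ↦ ‖(latticePt τ p - x)⁻¹‖ ^ 3 := by
  have hind : LinearIndependent ℝ ![τ, 1] := by
    rw [LinearIndependent.pair_iff]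
    intro s t h
    have him := congrArg Complex.im h
    have hre := congrArg Complex.re h
    simp [hτ.ne'] at him
    simp [him] at hre
    exact ⟨him, hre⟩
  let L : PeriodPair := ⟨τ, 1, hind⟩
  have h := (L.hasSum_sumInvPow x (r := 3) (by norm_num)).summable.norm
  rw [← L.latticeEquivProd.symm.toEquiv.summable_iff] at h
  refine h.congr fun p ↦ ?_
  have := L.latticeEquiv_symm_apply p
  simp [this, latticePt, L]

lemma summable_wp1Term {τ z : ℂ} (hτ : 0 < τ.im) (hz : ∀ p : ℤ × ℤ, z ≠ latticePt τ p) :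
    Summable (wp1Term z τ) := by
  have h0 := summable_norm_inv_latticePt_sub_pow hτ 0
  have h1 := summable_norm_inv_latticePt_sub_pow hτ z
  refine Summable.of_norm_bounded_eventually ((h0.add h1).mul_left (‖z‖ ^ 2)) ?_
  refine (Set.finite_singleton ((0, 0) : ℤ × ℤ)).subset fun p hp ↦ ?_
  by_contra hne
  refine hp ?_
  have hω := latticePt_ne_zero hτ hne
  have hd : latticePt τ p - z ≠ 0 := sub_ne_zero.2 (hz p).symm
  have heq : wp1Term z τ p =
      -(z ^ 2 * ((latticePt τ p)⁻¹ ^ 2 * (latticePt τ p - z)⁻¹)) := by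
    rw [wp1Term, ← neg_sub (latticePt τ p) z]
    field_simp
    ring
  rw [Set.mem_ofPred_eq, heq, norm_neg, norm_mul, norm_mul, norm_pow, norm_pow, sub_zero]
  gcongr
  generalize ha : ‖(latticePt τ p)⁻¹‖ = a
  generalize hb : ‖(latticePt τ p - z)⁻¹‖ = b
  have ha0 : 0 ≤ a := ha ▸ norm_nonneg _
  have hb0 : 0 ≤ b := hb ▸ norm_nonneg _
  rcases le_total a b with hab | hab
  · nlinarith [mul_le_mul_of_nonneg_right (pow_le_pow_left₀ ha0 hab 2) hb0, pow_nonneg ha0 3]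
  · nlinarith [mul_le_mul_of_nonneg_left hab (sq_nonneg a), pow_nonneg hb0 3]

lemma wp1_eq_tsum {τ z : ℂ} (hτ : 0 < τ.im) (hz : ∀ p : ℤ × ℤ, z ≠ latticePt τ p) :
    wp1 z τ = ∑' p, wp1Term z τ p := by
  rw [tsum_eq_add_tsum_ne (summable_wp1Term hτ hz) (0, 0)]
  simp [wp1, wp1Term, latticePt]

lemma tendsto_sum_Icc_one_div_sub_intCast {x : ℂ} (hx : x ∈ Complex.integerComplement) :
    Tendsto (fun N : ℕ ↦ ∑ l ∈ Finset.Icc (-N : ℤ) N, 1 / (x - l)) atTop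
      (𝓝 (π * Complex.cot (π * x))) := by
  have h := (tendsto_logDeriv_euler_cot_sub hx).const_add (1 / x)
  rw [add_sub_cancel] at h
  refine h.congr fun N ↦ ?_
  induction N with
  | zero => simp
  | succ N ih =>
    rw [Nat.cast_add, Nat.cast_one, Finset.Icc_succ_succ, Finset.sum_union (by simp),
      Finset.sum_pair (by lia), ← ih, Finset.sum_range_succ]
    push_cast
    simp only [cotTerm]
    ring

lemma tsum_one_div_sub_intCast_sub {x y : ℂ} (hx : x ∈ Complex.integerComplement)
    (hy : y ∈ Complex.integerComplement)
    (h : Summable fun l : ℤ ↦ 1 / (x - l) - 1 / (y - l)) :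
    ∑' l : ℤ, (1 / (x - l) - 1 / (y - l)) =
      π * Complex.cot (π * x) - π * Complex.cot (π * y) := by
  refine tendsto_nhds_unique (h.hasSum.comp Finset.tendsto_Icc_neg) ?_
  refine ((tendsto_sum_Icc_one_div_sub_intCast hx).sub
    (tendsto_sum_Icc_one_div_sub_intCast hy)).congr fun N ↦ ?_
  simp [Finset.sum_sub_distrib]

lemma tendsto_pi_mul_cot_of_im_atTop {u : ℕ → ℂ} (hu : Tendsto (fun N ↦ (u N).im) atTop atTop) :
    Tendsto (fun N ↦ π * Complex.cot (π * u N)) atTop (𝓝 (-(π * I))) := by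
  have he : Tendsto (fun N ↦ Complex.exp (2 * π * I * u N)) atTop (𝓝 0) := by
    rw [tendsto_zero_iff_norm_tendsto_zero]
    simp only [Complex.norm_exp]
    refine Real.tendsto_exp_atBot.comp ?_
    have : Tendsto (fun N ↦ -((2 * π) * (u N).im)) atTop atBot :=
      tendsto_neg_atTop_atBot.comp (hu.const_mul_atTop (by positivity))
    refine this.congr fun N ↦ ?_
    simp
  have := ((he.add_const 1).div ((he.const_sub 1).const_mul I) (by simp)).const_mul (π : ℂ)
  simp only [Complex.cot_pi_eq_exp_ratio]
  convert! this using 2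
  simp

lemma tendsto_pi_mul_cot_of_im_atBot {u : ℕ → ℂ} (hu : Tendsto (fun N ↦ (u N).im) atTop atBot) :
    Tendsto (fun N ↦ π * Complex.cot (π * u N)) atTop (𝓝 (π * I)) := by
  have := (tendsto_pi_mul_cot_of_im_atTop (u := fun N ↦ -u N)
    (by simpa using hu)).neg
  simpa [Complex.cot, div_neg] using this

lemma summable_e2Summand (τ : ℍ) : Summable (EisensteinSeries.e2Summand · τ) := by
  have hpos : Summable fun m : ℕ ↦ EisensteinSeries.e2Summand m τ := by
    rw [← summable_pnat_iff_summable_nat]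
    have h := (summable_prod_mul_pow 1 (norm_exp_two_pi_I_lt_one τ)).prod.mul_left
      ((-2 * π * I) ^ 2)
    refine h.congr fun m ↦ ?_
    have H := EisensteinSeries.qExpansion_identity_pnat (k := 1) (by norm_num)
      ⟨(m : ℂ) * τ, by simpa using τ.2⟩
    simp only [Nat.reduceAdd, pow_one, Nat.factorial_one, Nat.cast_one, div_one, one_div] at H
    simp only [EisensteinSeries.e2Summand, EisensteinSeries.eisSummand, Matrix.cons_val_zero,
      Matrix.cons_val_one, Matrix.cons_val_fin_one, zpow_neg, zpow_ofNat, Int.cast_natCast, H]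
    congr 1
    refine tsum_congr fun n ↦ ?_
    rw [pow_one, ← Complex.exp_nat_mul, ← Complex.exp_nat_mul]
    push_cast
    ring_nf
  refine summable_int_iff_summable_nat_and_neg.2 ⟨hpos, ?_⟩
  simpa [EisensteinSeries.e2Summand_even τ _] using hpos

lemma hasSum_G2 {τ : ℂ} (hτ : 0 < τ.im) :
    HasSum (fun m : ℤ ↦ ∑' l : ℤ, 1 / ((m : ℂ) * τ + l) ^ 2) (G2 τ) := by
  have hterm (m : ℤ) : ∑' l : ℤ, 1 / ((m : ℂ) * τ + l) ^ 2 =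
      EisensteinSeries.e2Summand m ⟨τ, hτ⟩ := by
    simp [EisensteinSeries.e2Summand, EisensteinSeries.eisSummand]
  have hs : Summable fun m : ℤ ↦ ∑' l : ℤ, 1 / ((m : ℂ) * τ + l) ^ 2 := by
    simpa only [hterm] using summable_e2Summand ⟨τ, hτ⟩
  have h0 : ∑' l : ℤ, 1 / (((0 : ℤ) : ℂ) * τ + l) ^ 2 = (π : ℂ) ^ 2 / 3 := by
    rw [hterm, EisensteinSeries.e2Summand_zero_eq_two_riemannZeta_two, riemannZeta_two]
    ring
  convert hs.hasSum using 1
  rw [tsum_eq_add_tsum_ne hs 0, h0, G2]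

lemma sub_intCast_mul_mem_integerComplement {τ z : ℂ} (hz : ∀ p : ℤ × ℤ, z ≠ latticePt τ p)
    (k : ℤ) : z - k * τ ∈ Complex.integerComplement := by
  rintro ⟨l, hl⟩
  exact hz (k, l) (by simp [latticePt, hl])

lemma tsum_wp1Term_add_sub_row {τ z : ℂ} (hτ : 0 < τ.im) (hz : ∀ p : ℤ × ℤ, z ≠ latticePt τ p)
    (hz' : ∀ p : ℤ × ℤ, z + τ ≠ latticePt τ p) (k : ℤ) :
    ∑' l : ℤ, (wp1Term (z + τ) τ (k, l) - wp1Term z τ (k, l)) =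
      (π * Complex.cot (π * (z - (k - 1 : ℤ) * τ)) - π * Complex.cot (π * (z - k * τ))) +
        (∑' l : ℤ, 1 / ((k : ℂ) * τ + l) ^ 2) * τ := by
  have hG : Summable fun l : ℤ ↦ 1 / ((k : ℂ) * τ + l) ^ 2 * τ := by
    simpa using (EisensteinSeries.linear_right_summable τ k le_rfl).mul_right τ
  have hrow := ((summable_wp1Term hτ hz').sub (summable_wp1Term hτ hz)).prod_factor k
  have heq (l : ℤ) : wp1Term (z + τ) τ (k, l) - wp1Term z τ (k, l) =
      (1 / (z - (k - 1 : ℤ) * τ - l) - 1 / (z - k * τ - l)) + 1 / ((k : ℂ) * τ + l) ^ 2 * τ := by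
    have e1 : z + τ - (k * τ + l) = z - (k - 1 : ℤ) * τ - l := by push_cast; ring
    have e2 : z - (k * τ + l) = z - k * τ - l := by ring
    simp only [wp1Term, latticePt, e1, e2]
    ring
  have hC : Summable fun l : ℤ ↦ 1 / (z - (k - 1 : ℤ) * τ - l) - 1 / (z - k * τ - l) := by
    refine (hrow.sub hG).congr fun l ↦ ?_
    rw [heq, add_sub_cancel_right]
  rw [tsum_congr heq, hC.tsum_add hG, tsum_mul_right,
    tsum_one_div_sub_intCast_sub (sub_intCast_mul_mem_integerComplement hz _)
      (sub_intCast_mul_mem_integerComplement hz _) hC]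

lemma sum_Icc_int_sub_pred (f : ℤ → ℂ) (N : ℕ) :
    ∑ k ∈ Finset.Icc (-N : ℤ) N, (f (k - 1) - f k) = f (-(N + 1)) - f N := by
  induction N with
  | zero => simp
  | succ N ih =>
    rw [Nat.cast_add, Nat.cast_one, Finset.Icc_succ_succ, Finset.sum_union (by simp),
      Finset.sum_pair (by lia), ih]
    ring_nf

/-- Quasi-periodicity of `℘₁` in the direction `τ`:
`℘₁(z+τ;τ) = ℘₁(z;τ) + G₂(τ)·τ − 2πi`. -/
theorem wp1_quasiperiodic_tau (τ z : ℂ) (hτ : 0 < τ.im)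
    (hz : ∀ p : ℤ × ℤ, z ≠ latticePt τ p) :
    wp1 (z + τ) τ = wp1 z τ + G2 τ * τ - 2 * Real.pi * Complex.I := by
  have hz' (p : ℤ × ℤ) : z + τ ≠ latticePt τ p := fun h ↦ hz (p.1 - 1, p.2) <| by
    rw [← add_right_cancel_iff (a := τ), h]
    simp only [latticePt]
    push_cast
    ring
  have hs := (summable_wp1Term hτ hz').sub (summable_wp1Term hτ hz)
  have hsub : wp1 (z + τ) τ - wp1 z τ =
      ∑' p, (wp1Term (z + τ) τ p - wp1Term z τ p) := by
    rw [wp1_eq_tsum hτ hz', wp1_eq_tsum hτ hz,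
      (summable_wp1Term hτ hz').tsum_sub (summable_wp1Term hτ hz)]
  have htel : Tendsto (fun N : ℕ ↦ ∑ k ∈ Finset.Icc (-N : ℤ) N,
      (π * Complex.cot (π * (z - (k - 1 : ℤ) * τ)) - π * Complex.cot (π * (z - k * τ)))) atTop
      (𝓝 (-(π * I) - π * I)) := by
    simp only [sum_Icc_int_sub_pred (fun k ↦ π * Complex.cot (π * (z - k * τ)))]
    have hN : Tendsto (fun N : ℕ ↦ (N : ℝ) * τ.im) atTop atTop :=
      tendsto_natCast_atTop_atTop.atTop_mul_const hτ
    refine (tendsto_pi_mul_cot_of_im_atTop ?_).sub (tendsto_pi_mul_cot_of_im_atBot ?_)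
    · refine (tendsto_atTop_add_const_left _ (z.im + τ.im) hN).congr fun N ↦ ?_
      simp
      ring
    · refine (tendsto_atBot_add_const_left _ z.im (tendsto_neg_atTop_atBot.comp hN)).congr
        fun N ↦ ?_
      simp
      ring
  have hlim : wp1 (z + τ) τ - wp1 z τ = (-(π * I) - π * I) + G2 τ * τ := by
    rw [hsub]
    refine tendsto_nhds_unique (hs.hasSum.prod_fiberwise
      (fun k ↦ (hs.prod_factor k).hasSum) |>.comp Finset.tendsto_Icc_neg) ?_
    refine (htel.add (((hasSum_G2 hτ).mul_right τ).comp Finset.tendsto_Icc_neg)).congr fun N ↦ ?_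
    simp only [Function.comp_apply, ← Finset.sum_add_distrib, tsum_wp1Term_add_sub_row hτ hz hz']
  linear_combination hlim
end

section
/- Let m ≥ 2 be an integer. For τ ∈ ℍ and u, v, w ∈ ℂ with u−v ∉ Λ_τ, u−w ∉ Λ_τ and v−w ∉ Λ_τ, define φ(u,v,w;τ) = 2πi·∂_τ℘_m(u−v;τ) + m·G₂(τ)·℘_m(u−v;τ) − m·G₂(τ)·(u−v)·℘_{m+1}(u−v;τ) + m·℘_{m+1}(u−v;τ)·( ℘₁(u−w;τ) − ℘₁(v−w;τ) ), where ∂_τ℘_m(z;τ) denotes the complex derivative of the function τ ↦ ℘_m(z;τ) at fixed z. Then for every g = (A B; C D) ∈ SL₂(ℤ): φ( u/(Cτ+D), v/(Cτ+D), w/(Cτ+D); (Aτ+B)/(Cτ+D) ) = (Cτ+D)^{m+2}·φ(u,v,w;τ). (This is the modular transformation of weight m+2 of the function ϑ_j(℘_m(z_r−z_s;·)) in the case j ∉ {r,s}.) -/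
open Complex Real

/-- The function `φ(u,v,w;τ) = 2πi·∂_τ℘_m(u−v;τ) + m·G₂(τ)·℘_m(u−v;τ)
− m·G₂(τ)·(u−v)·℘_{m+1}(u−v;τ) + m·℘_{m+1}(u−v;τ)·(℘₁(u−w;τ) − ℘₁(v−w;τ))`. -/
noncomputable def phiTheta (m : ℕ) (u v w τ : ℂ) : ℂ :=
  2 * Real.pi * Complex.I * deriv (fun s => wp m (u - v) s) τ +
    (m : ℂ) * G2 τ * wp m (u - v) τ -
    (m : ℂ) * G2 τ * (u - v) * wp (m + 1) (u - v) τ +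
    (m : ℂ) * wp (m + 1) (u - v) τ * (wp1 (u - w) τ - wp1 (v - w) τ)


open Filter Topology

/-- The summand of `℘_m(z;τ)`, `m ≥ 2`, extended to the whole lattice: as `1 / 0 = 0`, the
correction term needed for `m = 2` vanishes at the origin. -/
noncomputable def wpTerm (m : ℕ) (z τ : ℂ) (p : ℤ × ℤ) : ℂ :=
  1 / (z - latticePt τ p) ^ m - (if m = 2 then 1 else 0) / latticePt τ p ^ m

/-- The `τ`-derivative of `wpTerm`. -/
noncomputable def wpTermDeriv (m : ℕ) (z τ : ℂ) (p : ℤ × ℤ) : ℂ :=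
  m * p.1 * (1 / (z - latticePt τ p) ^ (m + 1) + (if m = 2 then 1 else 0) / latticePt τ p ^ (m + 1))

lemma norm_vec_eq_norm_prod (p : ℤ × ℤ) : ‖![p.1, p.2]‖ = ‖p‖ := by
  rw [EisensteinSeries.norm_eq_max_natAbs, Prod.norm_def]
  simp [Int.norm_eq_abs, Nat.cast_natAbs]

lemma summable_one_add_norm_pow_inv :
    Summable fun p : ℤ × ℤ ↦ ((1 + ‖p‖) ^ 3)⁻¹ := by
  have h := EisensteinSeries.summable_one_div_norm_rpow (k := 3) (by norm_num)
  rw [← (finTwoArrowEquiv ℤ).symm.summable_iff] at h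
  have h' : Summable fun p : ℤ × ℤ ↦ (‖p‖ ^ 3)⁻¹ := by
    refine h.congr fun p ↦ ?_
    rw [Function.comp_apply, finTwoArrowEquiv_symm_apply, norm_vec_eq_norm_prod,
      Real.rpow_neg (norm_nonneg _)]
    norm_cast
  rw [← Finset.summable_compl_iff {(0 : ℤ × ℤ)}] at h' ⊢
  refine h'.of_nonneg_of_le (fun p ↦ by positivity) fun p ↦ ?_
  have hp : 0 < ‖(p : ℤ × ℤ)‖ := norm_pos_iff.mpr (by simpa using p.2)
  gcongr
  linarith

lemma exists_mul_norm_le_norm_latticePt {τ : ℂ} (hτ : 0 < τ.im) :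
    ∃ r > 0, ∀ p : ℤ × ℤ, r * ‖p‖ ≤ ‖latticePt τ p‖ := by
  refine ⟨EisensteinSeries.r ⟨τ, hτ⟩, EisensteinSeries.r_pos _, fun p ↦ ?_⟩
  rcases eq_or_ne p 0 with rfl | hp
  · simp
  · have hx : ![p.1, p.2] ≠ 0 := by
      rwa [← norm_ne_zero_iff, norm_vec_eq_norm_prod, norm_ne_zero_iff]
    simpa [norm_vec_eq_norm_prod, latticePt] using EisensteinSeries.r_mul_max_le ⟨τ, hτ⟩ hx

lemma exists_le_norm_sub_latticePt {τ z : ℂ} (hτ : 0 < τ.im)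
    (hz : ∀ p : ℤ × ℤ, z ≠ latticePt τ p) :
    ∃ c > 0, ∀ p : ℤ × ℤ, c * (1 + ‖p‖) ≤ ‖z - latticePt τ p‖ := by
  obtain ⟨r, hr, hle⟩ := exists_mul_norm_le_norm_latticePt hτ
  have hO : (fun p : ℤ × ℤ ↦ 1 + ‖p‖) =O[cofinite] fun p ↦ z - latticePt τ p := by
    refine Asymptotics.IsBigO.of_bound (3 / r) ?_
    have ht : Tendsto (fun p : ℤ × ℤ ↦ ‖p‖) cofinite atTop :=
      tendsto_norm_comp_cofinite_atTop_of_isClosedEmbedding Topology.IsClosedEmbedding.id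
    filter_upwards [ht.eventually_ge_atTop ((3 * ‖z‖ + r) / (2 * r))] with p hp
    rw [div_le_iff₀ (by positivity)] at hp
    rw [Real.norm_of_nonneg (by positivity), div_mul_eq_mul_div, le_div_iff₀ hr]
    have h1 := norm_sub_norm_le (latticePt τ p) z
    rw [norm_sub_rev] at h1
    linarith [hle p]
  rw [Asymptotics.isBigO_cofinite_iff fun p h ↦ absurd (sub_eq_zero.mp h) (hz p)] at hO
  obtain ⟨C, hC⟩ := hO
  refine ⟨(max C 1)⁻¹, by positivity, fun p ↦ ?_⟩
  rw [inv_mul_le_iff₀ (by positivity)]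
  have := hC p
  rw [Real.norm_of_nonneg (by positivity)] at this
  exact this.trans (by gcongr; exact le_max_left _ _)

lemma norm_latticePt_sub_le (s τ : ℂ) (p : ℤ × ℤ) :
    ‖latticePt s p - latticePt τ p‖ ≤ ‖s - τ‖ * (1 + ‖p‖) := by
  have h : latticePt s p - latticePt τ p = p.1 * (s - τ) := by simp only [latticePt]; ring
  have h1 : ‖p.1‖ ≤ ‖p‖ := norm_fst_le p
  rw [h, norm_mul, mul_comm, Complex.norm_intCast]
  rw [Int.norm_eq_abs] at h1
  gcongr
  linarith

lemma exists_uniform_lattice_bound {τ z : ℂ} (hτ : 0 < τ.im)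
    (hz : ∀ p : ℤ × ℤ, z ≠ latticePt τ p) :
    ∃ c > 0, ∀ s ∈ Metric.ball τ c, ∀ p : ℤ × ℤ,
      c * (1 + ‖p‖) ≤ ‖z - latticePt s p‖ ∧ (p ≠ 0 → c * (1 + ‖p‖) ≤ ‖latticePt s p‖) := by
  obtain ⟨c, hc, hcle⟩ := exists_le_norm_sub_latticePt hτ hz
  obtain ⟨r, hr, hrle⟩ := exists_mul_norm_le_norm_latticePt hτ
  refine ⟨min (c / 2) (r / 4), by positivity, fun s hs p ↦ ?_⟩
  rw [Metric.mem_ball, dist_eq_norm, lt_min_iff] at hs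
  have hd := norm_latticePt_sub_le s τ p
  have hp0 : 0 < 1 + ‖p‖ := by positivity
  refine ⟨?_, fun hp ↦ ?_⟩
  · calc min (c / 2) (r / 4) * (1 + ‖p‖) ≤ c / 2 * (1 + ‖p‖) := by gcongr; exact min_le_left _ _
      _ ≤ ‖z - latticePt τ p‖ - ‖latticePt s p - latticePt τ p‖ := by
        nlinarith [hcle p, mul_lt_mul_of_pos_right hs.1 hp0]
      _ ≤ ‖z - latticePt τ p - (latticePt s p - latticePt τ p)‖ := norm_sub_norm_le _ _
      _ = ‖z - latticePt s p‖ := by ring_nf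
  · have h1 : 1 ≤ ‖p‖ := by
      by_contra! h
      refine hp (Prod.ext ?_ ?_)
      · have := (norm_fst_le p).trans_lt h
        rw [Int.norm_eq_abs] at this
        exact Int.abs_lt_one_iff.mp (by exact_mod_cast this)
      · have := (norm_snd_le p).trans_lt h
        rw [Int.norm_eq_abs] at this
        exact Int.abs_lt_one_iff.mp (by exact_mod_cast this)
    calc min (c / 2) (r / 4) * (1 + ‖p‖) ≤ r / 4 * (1 + ‖p‖) := by gcongr; exact min_le_right _ _
      _ ≤ ‖latticePt τ p‖ - ‖latticePt s p - latticePt τ p‖ := by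
        nlinarith [hrle p, mul_lt_mul_of_pos_right hs.2 hp0]
      _ ≤ ‖latticePt s p‖ := by
        have := norm_sub_norm_le (latticePt τ p) (latticePt s p)
        rw [norm_sub_rev] at this
        linarith

lemma norm_wpTerm_le {m : ℕ} (hm : 2 ≤ m) {z s : ℂ} {c : ℝ} (hc : 0 < c) {p : ℤ × ℤ}
    (h1 : c * (1 + ‖p‖) ≤ ‖z - latticePt s p‖)
    (h2 : p ≠ 0 → c * (1 + ‖p‖) ≤ ‖latticePt s p‖) :
    ‖wpTerm m z s p‖ ≤ ((c ^ m)⁻¹ + 2 * ‖z‖ * (c ^ 3)⁻¹ + ‖1 / z ^ 2‖) * ((1 + ‖p‖) ^ 3)⁻¹ := by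
  have hp0 : 0 < 1 + ‖p‖ := by positivity
  have hn1 : 0 < ‖z - latticePt s p‖ := lt_of_lt_of_le (by positivity) h1
  rw [add_mul, add_mul]
  rcases hm.lt_or_eq with hm | rfl
  · have h : ‖wpTerm m z s p‖ ≤ (c ^ m)⁻¹ * ((1 + ‖p‖) ^ 3)⁻¹ := by
      simp only [wpTerm, hm.ne', if_false, zero_div, sub_zero, one_div, norm_inv, norm_pow]
      rw [← mul_inv]
      gcongr
      calc c ^ m * (1 + ‖p‖) ^ 3 ≤ c ^ m * (1 + ‖p‖) ^ m := by
            gcongr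
            · linarith [norm_nonneg p]
            · exact hm
        _ = (c * (1 + ‖p‖)) ^ m := (mul_pow _ _ _).symm
        _ ≤ _ := by gcongr
    have : 0 ≤ 2 * ‖z‖ * (c ^ 3)⁻¹ * ((1 + ‖p‖) ^ 3)⁻¹ := by positivity
    have : 0 ≤ ‖1 / z ^ 2‖ * ((1 + ‖p‖) ^ 3)⁻¹ := by positivity
    linarith
  · have : 0 ≤ (c ^ 2)⁻¹ * ((1 + ‖p‖) ^ 3)⁻¹ := by positivity
    rcases eq_or_ne p 0 with rfl | hp
    · have : 0 ≤ (c ^ 2)⁻¹ + 2 * ‖z‖ * (c ^ 3)⁻¹ := by positivity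
      simpa [wpTerm, latticePt] using this
    · have h2 := h2 hp
      have hn2 : 0 < ‖latticePt s p‖ := lt_of_lt_of_le (by positivity) h2
      have ha : z - latticePt s p ≠ 0 := norm_pos_iff.mp hn1
      have hb : latticePt s p ≠ 0 := norm_pos_iff.mp hn2
      have heq : wpTerm 2 z s p =
          z * (latticePt s p * (z - latticePt s p) ^ 2)⁻¹ -
            z * (latticePt s p ^ 2 * (z - latticePt s p))⁻¹ := by
        simp only [wpTerm, if_true]
        field_simp
        ring
      have key : ∀ {a b : ℂ}, c * (1 + ‖p‖) ≤ ‖a‖ → c * (1 + ‖p‖) ≤ ‖b‖ →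
          ‖z * (a * b ^ 2)⁻¹‖ ≤ ‖z‖ * ((c ^ 3)⁻¹ * ((1 + ‖p‖) ^ 3)⁻¹) := by
        intro a b h h'
        rw [norm_mul, norm_inv, norm_mul, norm_pow, ← mul_inv]
        refine mul_le_mul_of_nonneg_left (inv_anti₀ (by positivity) ?_) (norm_nonneg z)
        calc c ^ 3 * (1 + ‖p‖) ^ 3 = (c * (1 + ‖p‖)) * (c * (1 + ‖p‖)) ^ 2 := by ring
          _ ≤ _ := by gcongr
      have k1 := key h2 h1
      have k2 := key h1 h2
      rw [mul_comm (z - _)] at k2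
      have : 0 ≤ ‖1 / z ^ 2‖ * ((1 + ‖p‖) ^ 3)⁻¹ := by positivity
      rw [heq]
      refine (norm_sub_le _ _).trans ?_
      linarith

lemma exists_summable_bound_wpTerm {m : ℕ} (hm : 2 ≤ m) {τ z : ℂ} (hτ : 0 < τ.im)
    (hz : ∀ p : ℤ × ℤ, z ≠ latticePt τ p) :
    ∃ c > 0, ∃ u : ℤ × ℤ → ℝ, Summable u ∧ ∀ s ∈ Metric.ball τ c, ∀ p : ℤ × ℤ,
      z - latticePt s p ≠ 0 ∧ (p ≠ 0 → latticePt s p ≠ 0) ∧ ‖wpTerm m z s p‖ ≤ u p := by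
  obtain ⟨c, hc, h⟩ := exists_uniform_lattice_bound hτ hz
  refine ⟨c, hc, _, summable_one_add_norm_pow_inv.mul_left _, fun s hs p ↦
    ⟨?_, fun hp ↦ ?_, norm_wpTerm_le hm hc (h s hs p).1 (h s hs p).2⟩⟩
  · exact norm_pos_iff.mp (lt_of_lt_of_le (by positivity) (h s hs p).1)
  · exact norm_pos_iff.mp (lt_of_lt_of_le (by positivity) ((h s hs p).2 hp))

lemma wp_eq_tsum_wpTerm {m : ℕ} (hm : 2 ≤ m) {z τ : ℂ} (h : Summable (wpTerm m z τ)) :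
    wp m z τ = ∑' p, wpTerm m z τ p := by
  rcases hm.lt_or_eq with hm | rfl
  · simp [wp, wpHigh, wpTerm, hm.ne', (by lia : m ≠ 1)]
  · rw [← h.sum_add_tsum_compl (s := {(0, 0)})]
    simp only [wp, wp2, Finset.sum_singleton, OfNat.ofNat_ne_one, if_true, if_false]
    congr 1
    · simp [wpTerm, latticePt]
    · refine Eq.trans ?_
        ((Equiv.subtypeEquivRight (p := fun p ↦ p ≠ (0, 0)) fun p ↦ by simp).tsum_eq _)
      exact tsum_congr fun p ↦ by simp [wpTerm]

lemma hasSum_wpTerm {m : ℕ} (hm : 2 ≤ m) {z τ : ℂ} (hτ : 0 < τ.im)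
    (hz : ∀ p : ℤ × ℤ, z ≠ latticePt τ p) : HasSum (wpTerm m z τ) (wp m z τ) := by
  obtain ⟨c, hc, u, hu, h⟩ := exists_summable_bound_wpTerm hm hτ hz
  have hs : Summable (wpTerm m z τ) :=
    .of_norm_bounded hu fun p ↦ (h τ (Metric.mem_ball_self hc) p).2.2
  rw [wp_eq_tsum_wpTerm hm hs]
  exact hs.hasSum

lemma hasDerivAt_wpTerm {m : ℕ} {z s : ℂ} {p : ℤ × ℤ} (h1 : z - latticePt s p ≠ 0)
    (h2 : p ≠ 0 → latticePt s p ≠ 0) :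
    HasDerivAt (fun s ↦ wpTerm m z s p) (wpTermDeriv m z s p) s := by
  have hl : HasDerivAt (fun s ↦ latticePt s p) (p.1 : ℂ) s := by
    simpa [latticePt] using ((hasDerivAt_id s).const_mul (p.1 : ℂ)).add_const (p.2 : ℂ)
  have ha : HasDerivAt (fun s ↦ 1 / (z - latticePt s p) ^ m)
      (m * p.1 * (1 / (z - latticePt s p) ^ (m + 1))) s := by
    have := ((hl.const_sub z).pow m).inv (pow_ne_zero m h1)
    simp only [one_div]
    refine this.congr_deriv ?_
    rcases m with _ | m
    · simp
    · simp only [Nat.add_sub_cancel, Pi.pow_apply]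
      field_simp
      ring
  have hb : HasDerivAt (fun s ↦ (if m = 2 then 1 else 0) / latticePt s p ^ m)
      (-(m * p.1 * ((if m = 2 then 1 else 0) / latticePt s p ^ (m + 1)))) s := by
    rcases eq_or_ne p 0 with rfl | hp
    · simpa [latticePt] using hasDerivAt_const s _
    · have hne := h2 hp
      have := ((hl.pow m).inv (pow_ne_zero m hne)).const_mul (if m = 2 then (1 : ℂ) else 0)
      simp only [div_eq_mul_inv]
      refine this.congr_deriv ?_
      rcases m with _ | m
      · simp
      · simp only [Nat.add_sub_cancel, Pi.pow_apply]
        field_simp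
        ring
  refine (ha.sub hb).congr_deriv ?_
  rw [wpTermDeriv]
  ring

lemma hasSum_wpTermDeriv {m : ℕ} (hm : 2 ≤ m) {z τ : ℂ} (hτ : 0 < τ.im)
    (hz : ∀ p : ℤ × ℤ, z ≠ latticePt τ p) :
    HasSum (wpTermDeriv m z τ) (deriv (fun s ↦ wp m z s) τ) := by
  obtain ⟨c, hc, u, hu, h⟩ := exists_summable_bound_wpTerm hm hτ hz
  have hτc := Metric.mem_ball_self (x := τ) hc
  have hd := fun p s hs ↦ hasDerivAt_wpTerm (m := m) (h s hs p).1 (h s hs p).2.1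
  have key := Complex.hasSum_deriv_of_summable_norm hu (F := fun p s ↦ wpTerm m z s p)
    (fun p s hs ↦ (hd p s hs).differentiableAt.differentiableWithinAt) Metric.isOpen_ball
    (fun p s hs ↦ (h s hs p).2.2) hτc
  have heq : (fun s ↦ wp m z s) =ᶠ[𝓝 τ] fun s ↦ ∑' p, wpTerm m z s p := by
    filter_upwards [Metric.isOpen_ball.mem_nhds hτc] with s hs
    exact wp_eq_tsum_wpTerm hm (.of_norm_bounded hu fun p ↦ (h s hs p).2.2)
  rw [heq.deriv_eq]
  exact key.congr_fun fun p ↦ ((hd p τ hτc).deriv).symm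

lemma e2Summand_eq_tsum_telescoped (z : UpperHalfPlane) {m : ℤ} (hm : m ≠ 0) :
    EisensteinSeries.e2Summand m z =
      ∑' n : ℤ, (((m : ℂ) * z + n) ^ 2 * (m * z + n + 1))⁻¹ := by
  have ht := EisensteinSeries.summable_right_one_div_linear_sub_one_div_linear_succ z m
  have ht0 := EisensteinSeries.tsum_symmetricIco_linear_sub_linear_add_one_eq_zero z m
  rw [tsum_eq_of_summable_unconditional ht] at ht0
  have he := EisensteinSeries.e2Summand_summable m z
  rw [EisensteinSeries.e2Summand, ← sub_zero (∑' n, _), ← ht0, ← he.tsum_sub ht]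
  refine tsum_congr fun n ↦ ?_
  have h0 : (m : ℂ) * z + n ≠ 0 := by
    simpa using UpperHalfPlane.linear_ne_zero z (cd := ![(m : ℝ), n]) (by simp [hm])
  have h1 : (m : ℂ) * z + n + 1 ≠ 0 := by
    simpa [add_assoc] using
      UpperHalfPlane.linear_ne_zero z (cd := ![(m : ℝ), n + 1]) (by simp [hm])
  simp only [EisensteinSeries.eisSummand, Matrix.cons_val_zero, Matrix.cons_val_one, zpow_neg,
    zpow_ofNat]
  field_simp
  ring

lemma summable_e2Summand_s13 (z : UpperHalfPlane) :
    Summable fun m ↦ EisensteinSeries.e2Summand m z := by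
  have h : Summable fun v : Fin 2 → ℤ ↦ (((v 0 : ℂ) * z + v 1) ^ 2 * (v 0 * z + v 1 + 1))⁻¹ := by
    apply EisensteinSeries.summable_of_isBigO_rpow_norm (a := 3) (by norm_num)
    simpa [pow_three, pow_two, ← mul_assoc] using
      ((EisensteinSeries.isBigO_linear_add_const_vec z 0 1).mul
        (EisensteinSeries.isBigO_linear_add_const_vec z 0 0)).mul
        (EisensteinSeries.isBigO_linear_add_const_vec z 0 0)
  rw [← (finTwoArrowEquiv ℤ).symm.summable_iff] at h
  refine h.prod.congr_cofinite ?_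
  filter_upwards [eventually_cofinite_ne (0 : ℤ)] with m hm
  rw [e2Summand_eq_tsum_telescoped z hm]
  simp

lemma G2_eq_eisensteinSeries_G2 (z : UpperHalfPlane) : G2 z = EisensteinSeries.G2 z := by
  have hs := summable_e2Summand_s13 z
  rw [EisensteinSeries.G2, tsum_eq_of_summable_unconditional hs,
    ← hs.sum_add_tsum_compl (s := {0}), Finset.sum_singleton,
    EisensteinSeries.e2Summand_zero_eq_two_riemannZeta_two, riemannZeta_two, G2]
  congr 1
  · ring
  · refine Eq.trans ?_
      ((Equiv.subtypeEquivRight (p := fun m ↦ m ≠ 0) fun m ↦ by simp).tsum_eq _)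
    refine tsum_congr fun m ↦ tsum_congr fun n ↦ ?_
    simp [EisensteinSeries.eisSummand, zpow_ofNat]

lemma G2_modular (g : Matrix.SpecialLinearGroup (Fin 2) ℤ) {τ : ℂ} (hτ : 0 < τ.im)
    (hj : ((g 1 0 : ℤ) * τ + (g 1 1 : ℤ) : ℂ) ≠ 0) :
    G2 (((g 0 0 : ℤ) * τ + (g 0 1 : ℤ)) / ((g 1 0 : ℤ) * τ + (g 1 1 : ℤ))) =
      ((g 1 0 : ℤ) * τ + (g 1 1 : ℤ)) ^ 2 * G2 τ -
        2 * Real.pi * Complex.I * (g 1 0 : ℤ) * ((g 1 0 : ℤ) * τ + (g 1 1 : ℤ)) := by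
  have h := congrFun (EisensteinSeries.G2_slash_action g) ⟨τ, hτ⟩
  rw [ModularForm.SL_slash_apply, ← G2_eq_eisensteinSeries_G2, Pi.sub_apply,
    ← G2_eq_eisensteinSeries_G2, EisensteinSeries.D2,
    UpperHalfPlane.coe_specialLinearGroup_apply, ModularGroup.denom_apply] at h
  simp only [algebraMap_int_eq, eq_intCast, Complex.ofReal_intCast, zpow_neg, zpow_ofNat] at h
  rw [← div_eq_mul_inv, div_eq_iff (pow_ne_zero 2 hj)] at h
  rw [h]
  field_simp

/-- The action of `g ∈ SL₂(ℤ)` on lattice coordinates induced by the lattice isomorphism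
`Λ_τ → Λ_{gτ}`, `x ↦ x / (Cτ + D)`. -/
def latticeEquiv (g : Matrix.SpecialLinearGroup (Fin 2) ℤ) : ℤ × ℤ ≃ ℤ × ℤ where
  toFun p := (g 1 1 * p.1 - g 1 0 * p.2, -g 0 1 * p.1 + g 0 0 * p.2)
  invFun p := (g 0 0 * p.1 + g 1 0 * p.2, g 0 1 * p.1 + g 1 1 * p.2)
  left_inv p := by
    have h := g.det_coe
    rw [Matrix.det_fin_two] at h
    ext
    · linear_combination p.1 * h
    · linear_combination p.2 * h
  right_inv p := by
    have h := g.det_coe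
    rw [Matrix.det_fin_two] at h
    ext
    · linear_combination p.1 * h
    · linear_combination p.2 * h

lemma latticePt_latticeEquiv (g : Matrix.SpecialLinearGroup (Fin 2) ℤ) {τ : ℂ}
    (hj : ((g 1 0 : ℤ) * τ + (g 1 1 : ℤ) : ℂ) ≠ 0) (p : ℤ × ℤ) :
    latticePt (((g 0 0 : ℤ) * τ + (g 0 1 : ℤ)) / ((g 1 0 : ℤ) * τ + (g 1 1 : ℤ)))
      (latticeEquiv g p) = latticePt τ p / ((g 1 0 : ℤ) * τ + (g 1 1 : ℤ)) := by
  have h := g.det_coe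
  rw [Matrix.det_fin_two] at h
  have h' : ((g 0 0 : ℤ) * (g 1 1 : ℤ) - (g 0 1 : ℤ) * (g 1 0 : ℤ) : ℂ) = 1 := by exact_mod_cast h
  simp only [latticePt, latticeEquiv, Equiv.coe_fn_mk]
  push_cast
  field_simp
  linear_combination (p.1 * τ + p.2) * h'

lemma coe_fst_latticeEquiv (g : Matrix.SpecialLinearGroup (Fin 2) ℤ) (τ : ℂ) (p : ℤ × ℤ) :
    ((latticeEquiv g p).1 : ℂ) =
      ((g 1 0 : ℤ) * τ + (g 1 1 : ℤ)) * p.1 - (g 1 0 : ℤ) * latticePt τ p := by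
  simp only [latticePt, latticeEquiv, Equiv.coe_fn_mk]
  push_cast
  ring

lemma wp1_modular (g : Matrix.SpecialLinearGroup (Fin 2) ℤ) {τ : ℂ}
    (hj : ((g 1 0 : ℤ) * τ + (g 1 1 : ℤ) : ℂ) ≠ 0) (z : ℂ) :
    wp1 (z / ((g 1 0 : ℤ) * τ + (g 1 1 : ℤ)))
        (((g 0 0 : ℤ) * τ + (g 0 1 : ℤ)) / ((g 1 0 : ℤ) * τ + (g 1 1 : ℤ))) =
      ((g 1 0 : ℤ) * τ + (g 1 1 : ℤ)) * wp1 z τ := by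
  have h0 : latticeEquiv g (0, 0) = (0, 0) := by simp [latticeEquiv]
  rw [wp1, wp1, mul_add, ← tsum_mul_left, ← Equiv.tsum_eq ((latticeEquiv g).subtypeEquiv
    (p := fun p ↦ p ≠ (0, 0)) fun p ↦ by rw [← (latticeEquiv g).injective.ne_iff, h0])]
  simp only [Equiv.subtypeEquiv_apply, latticePt_latticeEquiv g hj]
  generalize ((g 1 0 : ℤ) * τ + (g 1 1 : ℤ) : ℂ) = j at hj
  congr 1
  · rw [one_div_div]; ring
  · refine tsum_congr fun p ↦ ?_
    rw [← sub_div, one_div_div, one_div_div, div_pow]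
    field_simp

section Modular

variable (g : Matrix.SpecialLinearGroup (Fin 2) ℤ) {τ z : ℂ}

lemma ne_latticePt_modular (hj : ((g 1 0 : ℤ) * τ + (g 1 1 : ℤ) : ℂ) ≠ 0)
    (hz : ∀ p : ℤ × ℤ, z ≠ latticePt τ p) (p : ℤ × ℤ) :
    z / ((g 1 0 : ℤ) * τ + (g 1 1 : ℤ)) ≠
      latticePt (((g 0 0 : ℤ) * τ + (g 0 1 : ℤ)) / ((g 1 0 : ℤ) * τ + (g 1 1 : ℤ))) p := by
  obtain ⟨q, rfl⟩ := (latticeEquiv g).surjective p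
  rw [latticePt_latticeEquiv g hj]
  exact fun h ↦ hz q ((div_left_inj' hj).mp h)

lemma moebius_im_pos (hτ : 0 < τ.im) :
    0 < (((g 0 0 : ℤ) * τ + (g 0 1 : ℤ)) / ((g 1 0 : ℤ) * τ + (g 1 1 : ℤ)) : ℂ).im := by
  have h := (g • (⟨τ, hτ⟩ : UpperHalfPlane)).im_pos
  rw [← UpperHalfPlane.coe_im, UpperHalfPlane.coe_specialLinearGroup_apply] at h
  simpa only [algebraMap_int_eq, eq_intCast, Complex.ofReal_intCast] using h

lemma denom_ne_zero_of_im_pos (hτ : 0 < τ.im) :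
    ((g 1 0 : ℤ) * τ + (g 1 1 : ℤ) : ℂ) ≠ 0 := by
  have := UpperHalfPlane.denom_ne_zero g ⟨τ, hτ⟩
  rwa [ModularGroup.denom_apply] at this

lemma wp_modular {m : ℕ} (hm : 2 ≤ m) (hτ : 0 < τ.im) (hz : ∀ p : ℤ × ℤ, z ≠ latticePt τ p) :
    wp m (z / ((g 1 0 : ℤ) * τ + (g 1 1 : ℤ)))
        (((g 0 0 : ℤ) * τ + (g 0 1 : ℤ)) / ((g 1 0 : ℤ) * τ + (g 1 1 : ℤ))) =
      ((g 1 0 : ℤ) * τ + (g 1 1 : ℤ)) ^ m * wp m z τ := by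
  have hj := denom_ne_zero_of_im_pos g hτ
  have h := (latticeEquiv g).hasSum_iff.mpr
    (hasSum_wpTerm hm (moebius_im_pos g hτ) (ne_latticePt_modular g hj hz))
  refine h.unique (((hasSum_wpTerm hm hτ hz).mul_left _).congr_fun fun p ↦ ?_)
  rw [Function.comp_apply, wpTerm, latticePt_latticeEquiv g hj, wpTerm, ← sub_div, div_pow, div_pow]
  field_simp

lemma wpTermDeriv_latticeEquiv {m : ℕ} (hm : 2 ≤ m)
    (hj : ((g 1 0 : ℤ) * τ + (g 1 1 : ℤ) : ℂ) ≠ 0)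
    (hz : ∀ p : ℤ × ℤ, z ≠ latticePt τ p) (p : ℤ × ℤ) :
    wpTermDeriv m (z / ((g 1 0 : ℤ) * τ + (g 1 1 : ℤ)))
        (((g 0 0 : ℤ) * τ + (g 0 1 : ℤ)) / ((g 1 0 : ℤ) * τ + (g 1 1 : ℤ))) (latticeEquiv g p) =
      ((g 1 0 : ℤ) * τ + (g 1 1 : ℤ)) ^ (m + 2) * wpTermDeriv m z τ p +
        m * (g 1 0 : ℤ) * ((g 1 0 : ℤ) * τ + (g 1 1 : ℤ)) ^ (m + 1) *
          (wpTerm m z τ p - z * wpTerm (m + 1) z τ p) := by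
  have hne : z - latticePt τ p ≠ 0 := sub_ne_zero.mpr (hz p)
  have hcorr : (if m = 2 then 1 else 0) / latticePt τ p ^ m =
      latticePt τ p * ((if m = 2 then 1 else 0) / latticePt τ p ^ (m + 1)) := by
    rcases eq_or_ne (latticePt τ p) 0 with h0 | h0
    · simp [h0, (by lia : m ≠ 0)]
    · field_simp
      ring
  have hmain : 1 / (z - latticePt τ p) ^ m =
      (z - latticePt τ p) * (1 / (z - latticePt τ p) ^ (m + 1)) := by
    field_simp
    ring
  rw [wpTermDeriv, wpTermDeriv, wpTerm, wpTerm, latticePt_latticeEquiv g hj,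
    coe_fst_latticeEquiv g τ, hcorr, hmain, ← sub_div, div_pow, div_pow, one_div_div,
    div_div_eq_mul_div, if_neg (by lia : m + 1 ≠ 2)]
  ring

lemma deriv_wp_modular {m : ℕ} (hm : 2 ≤ m) (hτ : 0 < τ.im)
    (hz : ∀ p : ℤ × ℤ, z ≠ latticePt τ p) :
    deriv (fun s ↦ wp m (z / ((g 1 0 : ℤ) * τ + (g 1 1 : ℤ))) s)
        (((g 0 0 : ℤ) * τ + (g 0 1 : ℤ)) / ((g 1 0 : ℤ) * τ + (g 1 1 : ℤ))) =
      ((g 1 0 : ℤ) * τ + (g 1 1 : ℤ)) ^ (m + 2) * deriv (fun s ↦ wp m z s) τ +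
        m * (g 1 0 : ℤ) * ((g 1 0 : ℤ) * τ + (g 1 1 : ℤ)) ^ (m + 1) *
          (wp m z τ - z * wp (m + 1) z τ) := by
  have hj := denom_ne_zero_of_im_pos g hτ
  have h := (latticeEquiv g).hasSum_iff.mpr
    (hasSum_wpTermDeriv hm (moebius_im_pos g hτ) (ne_latticePt_modular g hj hz))
  refine h.unique ((((hasSum_wpTermDeriv hm hτ hz).mul_left _).add
    (((hasSum_wpTerm hm hτ hz).sub
      ((hasSum_wpTerm (by lia : 2 ≤ m + 1) hτ hz).mul_left z)).mul_left _)).congr_fun fun p ↦ ?_)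
  exact wpTermDeriv_latticeEquiv g hm hj hz p

end Modular

/-- Modular transformation of weight `m+2` of `φ = ϑ_j(℘_m(z_r−z_s;·))` (case `j ∉ {r,s}`):
for `g = (A B; C D) ∈ SL₂(ℤ)`,
`φ(u/(Cτ+D), v/(Cτ+D), w/(Cτ+D); (Aτ+B)/(Cτ+D)) = (Cτ+D)^{m+2}·φ(u,v,w;τ)`. -/
theorem phiTheta_modular (m : ℕ) (hm : 2 ≤ m)
    (g : Matrix.SpecialLinearGroup (Fin 2) ℤ) (τ u v w : ℂ) (hτ : 0 < τ.im)
    (huv : ∀ p : ℤ × ℤ, u - v ≠ latticePt τ p)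
    (huw : ∀ p : ℤ × ℤ, u - w ≠ latticePt τ p)
    (hvw : ∀ p : ℤ × ℤ, v - w ≠ latticePt τ p) :
    phiTheta m (u / ((g 1 0 : ℤ) * τ + (g 1 1 : ℤ)))
        (v / ((g 1 0 : ℤ) * τ + (g 1 1 : ℤ)))
        (w / ((g 1 0 : ℤ) * τ + (g 1 1 : ℤ)))
        (((g 0 0 : ℤ) * τ + (g 0 1 : ℤ)) / ((g 1 0 : ℤ) * τ + (g 1 1 : ℤ))) =
      ((g 1 0 : ℤ) * τ + (g 1 1 : ℤ)) ^ (m + 2) * phiTheta m u v w τ := by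
  have hj := denom_ne_zero_of_im_pos g hτ
  have hG := G2_modular g hτ hj
  have hd := deriv_wp_modular g hm hτ huv
  have hw := wp_modular g hm hτ huv
  have hw' := wp_modular g (by lia : 2 ≤ m + 1) hτ huv
  have h1 := wp1_modular g hj (u - w)
  have h2 := wp1_modular g hj (v - w)
  rw [phiTheta, phiTheta, ← sub_div, ← sub_div, ← sub_div, hG, hd, hw, hw', h1, h2]
  generalize ((g 1 0 : ℤ) * τ + (g 1 1 : ℤ) : ℂ) = j at hj ⊢
  field_simp
  ring
end
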